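/- Let T > 0 and let a ∈ L¹([0,T]). Assume there exists a closed interval J ⊆ [0,T] such that a(x) ≥ 0 for a.e. x ∈ J and ∫₀ᵀ a(x) dx < 0 < ∫_J a(x) dx. Let g satisfy (g1), be regularly oscillating at zero, and satisfy lim_{s→0⁺} g(s)/s = 0 and 0 < liminf_{s→+∞} g(s)/s ≤ limsup_{s→+∞} g(s)/s < +∞. Then there exists ν* > 0 such that for every ν > ν* the equation u'' + ν a(x) g(u) = 0 has at least one positive solution satisfying the Neumann boundary conditions and at least one positive solution satisfying the periodic boundary conditions. -/

import Mathlib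

open MeasureTheory Set Filter

/-- `u` (with derivative `u'`) is a C¹ solution of `u'' + f(x) = 0` on `[0,T]`:
`u'` is absolutely continuous and the equation holds a.e., expressed via the
integral equation `u'(x) = u'(0) − ∫₀ˣ f(t) dt`. -/
def IsSolOn (T : ℝ) (f : ℝ → ℝ) (u u' : ℝ → ℝ) : Prop :=
  (∀ x ∈ Icc (0:ℝ) T, HasDerivWithinAt u (u' x) (Icc (0:ℝ) T) x) ∧
  ContinuousOn u' (Icc (0:ℝ) T) ∧
  ∀ x ∈ Icc (0:ℝ) T, u' x = u' 0 - ∫ t in (0:ℝ)..x, f t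

/-- The equation `u'' + a(x) g(u) = 0` on `[0,T]` has a positive solution
satisfying the Neumann boundary conditions. -/
def PosSolNeumann (T : ℝ) (a g : ℝ → ℝ) : Prop :=
  ∃ u u' : ℝ → ℝ, IsSolOn T (fun t => a t * g (u t)) u u' ∧
    (∀ x ∈ Icc (0:ℝ) T, 0 < u x) ∧ u' 0 = 0 ∧ u' T = 0

/-- The equation `u'' + a(x) g(u) = 0` on `[0,T]` has a positive solution
satisfying the periodic boundary conditions. -/
def PosSolPeriodic (T : ℝ) (a g : ℝ → ℝ) : Prop :=
  ∃ u u' : ℝ → ℝ, IsSolOn T (fun t => a t * g (u t)) u u' ∧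
    (∀ x ∈ Icc (0:ℝ) T, 0 < u x) ∧ u 0 = u T ∧ u' 0 = u' T

/-- Condition (g1): `g : [0,∞) → [0,∞)` is continuous, `g 0 = 0`, `g > 0` on `(0,∞)`. -/
def CondG1 (g : ℝ → ℝ) : Prop :=
  ContinuousOn g (Ici (0:ℝ)) ∧ (∀ s : ℝ, 0 ≤ s → 0 ≤ g s) ∧ g 0 = 0 ∧
    ∀ s : ℝ, 0 < s → 0 < g s

/-- `g` is regularly oscillating at zero. -/
def RegOscAtZero (g : ℝ → ℝ) : Prop :=
  ∀ ε : ℝ, 0 < ε → ∃ δ > (0:ℝ), ∃ η > (0:ℝ), ∀ s ω : ℝ,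
    0 < s → s < δ → |ω - 1| < η → |g (ω * s) / g s - 1| < ε

/-- `liminf_{s → +∞} g(s)/s`, computed in `EReal`. -/
noncomputable def GrowthLiminf (g : ℝ → ℝ) : EReal :=
  liminf (fun s : ℝ => ((g s / s : ℝ) : EReal)) atTop

/-- `limsup_{s → +∞} g(s)/s`, computed in `EReal`. -/
noncomputable def GrowthLimsup (g : ℝ → ℝ) : EReal :=
  limsup (fun s : ℝ => ((g s / s : ℝ) : EReal)) atTop

/-!
Write a positive solution as `u = eʷ` and put `z = w' = u' / u`. The equation becomes the planar
system `w' = z`, `z' = -z² - ν a(x) φ(w)` with `φ(s) = g(eˢ) / eˢ`, which is positive and bounded.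
Truncating `z` on the right-hand sides makes all solutions global. Since `φ` is only continuous,
initial value problems need not be uniquely solvable, and the Poincaré map is replaced by the
continuous endpoint maps of Euler polygons, whose limits are endpoints of solutions.

Consider solutions with `z` vanishing somewhere. When `w(0)` is very negative, `w` varies little
and, by regular oscillation, so does `φ(w)` relative to its size: as `∫ a < 0`, it follows that
`z(0) < z(T)`. When `w(0)` is very positive, `φ(w)` is bounded away from zero, and for large `ν` the
Riccati inequality `z' ≤ -z² - κ ν a` on `J` cannot be satisfied without blow-up unless
`z(T) < z(0)`. In between, the intermediate value theorem gives the Neumann solution, and for the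
periodic one the map `(w(T) - w(0), z(T) - z(0))` is shown to have a zero by following its polar
angle along the boundary of a rectangle. Any solution with a zero of `z` and `z(0) ≤ z(T)` stays
below the truncation level.
-/

section PlanarZero

lemma lt_of_continuous_of_forall_ne {X : Type*} [TopologicalSpace X] [PreconnectedSpace X]
    {f : X → ℝ} {c : ℝ} {x : X} (hf : Continuous f) (hne : ∀ y, f y ≠ c) (hx : f x < c) (y : X) :
    f y < c := by
  by_contra! hy
  obtain ⟨w, hw⟩ := mem_range_of_exists_le_of_exists_ge hf ⟨x, hx.le⟩ ⟨y, hy⟩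
  exact hne w hw

lemma gt_of_continuous_of_forall_ne {X : Type*} [TopologicalSpace X] [PreconnectedSpace X]
    {f : X → ℝ} {c : ℝ} {x : X} (hf : Continuous f) (hne : ∀ y, f y ≠ c) (hx : c < f x) (y : X) :
    c < f y := by
  by_contra! hy
  obtain ⟨w, hw⟩ := mem_range_of_exists_le_of_exists_ge hf ⟨y, hy⟩ ⟨x, hx.le⟩
  exact hne w hw

lemma exists_continuous_polar_angle {X : Type*} [TopologicalSpace X] [SimplyConnectedSpace X]
    [LocallyPathConnectedSpace X] {f g : X → ℝ} {x₀ : X} (hf : Continuous f) (hg : Continuous g)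
    (hfg : ∀ x, f x = 0 → g x ≠ 0) (hx₀ : 0 < f x₀) :
    ∃ r θ : X → ℝ, Continuous θ ∧ |θ x₀| < Real.pi / 2 ∧
      ∀ x, 0 < r x ∧ f x = r x * Real.cos (θ x) ∧ g x = r x * Real.sin (θ x) := by
  let G : C(X, ℂ) := ⟨fun x ↦ ⟨f x, g x⟩, by
    simpa only [Complex.mk_eq_add_mul_I] using by fun_prop⟩
  have hG : ∀ x, G x ≠ 0 := fun x hx ↦ hfg x congr(($hx).re) congr(($hx).im)
  obtain ⟨L, ⟨hL₀, hL⟩, -⟩ := Complex.isCoveringMapOn_exp.existsUnique_continuousMap_lifts G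
    (Complex.exp_log (hG x₀)) hG
  have hexp (x) : Complex.exp (L x) = G x := congr($hL x)
  refine ⟨fun x ↦ Real.exp (L x).re, fun x ↦ (L x).im, by fun_prop, ?_, fun x ↦
    ⟨Real.exp_pos _, ?_, ?_⟩⟩
  · beta_reduce
    rw [hL₀, Complex.log_im, Complex.abs_arg_lt_pi_div_two_iff]
    exact Or.inl hx₀
  · rw [← Complex.exp_re, hexp]; rfl
  · rw [← Complex.exp_im, hexp]; rfl

theorem exists_common_zero_of_lines {f g : ℝ × ℝ → ℝ} {a b c d : ℝ}
    (hf : Continuous f) (hg : Continuous g)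
    (hbot : ∀ x, f (x, c) < 0) (htop : ∀ x, 0 < f (x, d))
    (hleft : ∀ y, f (a, y) = 0 → 0 < g (a, y)) (hright : ∀ y, f (b, y) = 0 → g (b, y) < 0) :
    ∃ p, f p = 0 ∧ g p = 0 := by
  -- Going from `(a, d)` to `(b, c)` through `(b, d)` keeps the polar angle of `(f, g)` below
  -- `π / 2`, whereas going through `(a, c)` brings it above.
  by_contra! hfg
  obtain ⟨r, θ, hθ, hθ₀, hpolar⟩ := exists_continuous_polar_angle hf hg hfg (htop a)
  obtain ⟨hθ_gt, hθ_lt⟩ := abs_lt.1 hθ₀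
  have hf_zero {p} (h : θ p = Real.pi / 2 ∨ θ p = -(Real.pi / 2)) : f p = 0 := by
    rw [(hpolar p).2.1]; rcases h with h | h <;> simp [h]
  have hg_pos {p} (h : θ p = Real.pi / 2) : 0 < g p := by
    rw [(hpolar p).2.2, h, Real.sin_pi_div_two, mul_one]; exact (hpolar p).1
  have hg_neg {p} (h : θ p = -(Real.pi / 2)) : g p < 0 := by
    rw [(hpolar p).2.2, h, Real.sin_neg, Real.sin_pi_div_two]; linarith [(hpolar p).1]
  have top_right : θ (b, d) < Real.pi / 2 :=
    lt_of_continuous_of_forall_ne (f := fun x ↦ θ (x, d)) (by fun_prop)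
      (fun x h ↦ (htop x).ne' (hf_zero (.inl h))) hθ_lt b
  have bot_right : θ (b, c) < Real.pi / 2 :=
    lt_of_continuous_of_forall_ne (f := fun y ↦ θ (b, y)) (by fun_prop)
      (fun y h ↦ (hright y (hf_zero (.inl h))).not_gt (hg_pos h)) top_right c
  have bot_left : -(Real.pi / 2) < θ (a, c) :=
    gt_of_continuous_of_forall_ne (f := fun y ↦ θ (a, y)) (by fun_prop)
      (fun y h ↦ (hleft y (hf_zero (.inr h))).not_gt (hg_neg h)) hθ_gt c
  have bot_left' : Real.pi / 2 < θ (a, c) := by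
    by_contra! h
    have := Real.cos_nonneg_of_neg_pi_div_two_le_of_le bot_left.le h
    exact (hbot a).not_ge ((hpolar (a, c)).2.1 ▸ mul_nonneg (hpolar _).1.le this)
  exact bot_right.not_gt <| gt_of_continuous_of_forall_ne (f := fun x ↦ θ (x, c)) (by fun_prop)
    (fun x h ↦ (hbot x).ne (hf_zero (.inl h))) bot_left' b

theorem exists_common_zero_of_rectangle {f g : ℝ × ℝ → ℝ} {a b c d : ℝ} (hab : a ≤ b)
    (hcd : c ≤ d) (hf : ContinuousOn f (Icc (a, c) (b, d)))
    (hg : ContinuousOn g (Icc (a, c) (b, d)))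
    (hbot : ∀ x ∈ Icc a b, f (x, c) < 0) (htop : ∀ x ∈ Icc a b, 0 < f (x, d))
    (hleft : ∀ y ∈ Icc c d, f (a, y) = 0 → 0 < g (a, y))
    (hright : ∀ y ∈ Icc c d, f (b, y) = 0 → g (b, y) < 0) :
    ∃ p ∈ Icc (a, c) (b, d), f p = 0 ∧ g p = 0 := by
  let ρ (p : ℝ × ℝ) : ℝ × ℝ := (projIcc a b hab p.1, projIcc c d hcd p.2)
  have hρ : Continuous ρ := by fun_prop
  have hρ_mem (p) : ρ p ∈ Icc (a, c) (b, d) :=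
    ⟨⟨(projIcc a b hab p.1).2.1, (projIcc c d hcd p.2).2.1⟩,
      ⟨(projIcc a b hab p.1).2.2, (projIcc c d hcd p.2).2.2⟩⟩
  obtain ⟨p, hp⟩ := exists_common_zero_of_lines (f := f ∘ ρ) (g := g ∘ ρ) (a := a) (b := b)
    (c := c) (d := d) (hf.comp_continuous hρ hρ_mem) (hg.comp_continuous hρ hρ_mem)
    (fun x ↦ by simpa [ρ] using hbot _ (projIcc a b hab x).2)
    (fun x ↦ by simpa [ρ] using htop _ (projIcc a b hab x).2)
    (fun y ↦ by simpa [ρ] using hleft _ (projIcc c d hcd y).2)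
    (fun y ↦ by simpa [ρ] using hright _ (projIcc c d hcd y).2)
  exact ⟨ρ p, hρ_mem p, hp⟩

end PlanarZero

section Compactness

open scoped Topology

lemma isCompact_setOf_dist_le {X Y E : Type*} [TopologicalSpace X] [PseudoMetricSpace Y]
    [MetricSpace E] [ProperSpace E] {d : X → Y} (hd : Continuous d) (x₀ : X) {Q : Set E}
    (hQ : IsCompact Q) :
    IsCompact {u : C(X, E) | u x₀ ∈ Q ∧ ∀ x x', dist (u x) (u x') ≤ dist (d x) (d x')} := by
  have hd₀ (x : X) : Tendsto (fun x' ↦ dist (d x) (d x')) (𝓝 x) (𝓝 0) := by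
    simpa only [dist_self] using
      (continuous_const.dist hd).tendsto x (f := fun x' ↦ dist (d x) (d x'))
  have himage : ContinuousMap.toFun '' {u : C(X, E) | u x₀ ∈ Q ∧
      ∀ x x', dist (u x) (u x') ≤ dist (d x) (d x')} =
      {u | u x₀ ∈ Q ∧ ∀ x x', dist (u x) (u x') ≤ dist (d x) (d x')} := by
    refine Subset.antisymm (by rintro _ ⟨u, hu, rfl⟩; exact hu) fun u hu ↦
      ⟨⟨u, continuous_iff_continuousAt.2 fun x ↦ tendsto_iff_dist_tendsto_zero.2 ?_⟩, hu, rfl⟩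
    exact squeeze_zero (fun _ ↦ dist_nonneg) (fun x' ↦ dist_comm (u x') _ ▸ hu.2 x x') (hd₀ x)
  refine ArzelaAscoli.isCompact_of_equicontinuous _ ?_ fun x ↦
    Metric.equicontinuousAt_of_continuity_modulus _ (hd₀ x) _ (.of_forall fun x' u ↦ u.2.2 x x')
  rw [himage]
  refine (isCompact_univ_pi fun x ↦ hQ.cthickening (r := dist (d x) (d x₀))).of_isClosed_subset
    ?_ fun u hu x _ ↦ Metric.mem_cthickening_of_dist_le _ _ _ _ hu.1 (hu.2 x x₀)
  simp only [ofPred_and, ofPred_forall]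
  exact (hQ.isClosed.preimage (continuous_apply x₀)).inter <| isClosed_iInter fun x ↦
    isClosed_iInter fun x' ↦ isClosed_le (by fun_prop) continuous_const

end Compactness

section Caratheodory

open scoped Topology

lemma aestronglyMeasurable_of_countable {α ι β : Type*} [MeasurableSpace α] {μ : Measure α}
    [Countable ι] [MeasurableSpace ι] [MeasurableSingletonClass ι] [TopologicalSpace β]
    [TopologicalSpace.PseudoMetrizableSpace β] {F : ι → α → β} {N : α → ι} (hN : Measurable N)
    (hF : ∀ i, AEStronglyMeasurable (F i) μ) : AEStronglyMeasurable (fun x ↦ F (N x) x) μ := by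
  rw [← Measure.restrict_univ (μ := μ), ← preimage_univ (f := N), ← iUnion_of_singleton,
    preimage_iUnion, aestronglyMeasurable_iUnion_iff]
  refine fun i ↦ (hF i).restrict.congr ?_
  filter_upwards [ae_restrict_mem (hN (measurableSet_singleton i))] with x hx
  rw [mem_singleton_iff.1 hx]

lemma intervalIntegrable_of_locallyIntegrable {m : ℝ → ℝ} (hm : LocallyIntegrable m) (x y : ℝ) :
    IntervalIntegrable m volume x y :=
  (hm.integrableOn_isCompact isCompact_uIcc).intervalIntegrable

variable {E : Type*} [NormedAddCommGroup E]

/-- `f` is a Carathéodory vector field dominated by the locally integrable function `m`: it is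
measurable in time and continuous in space. -/
structure IsCaratheodory (f : ℝ → E → E) (m : ℝ → ℝ) : Prop where
  aestronglyMeasurable : ∀ y, AEStronglyMeasurable (f · y)
  continuous : ∀ t, Continuous (f t)
  norm_le : ∀ t y, ‖f t y‖ ≤ m t
  locallyIntegrable : LocallyIntegrable m

variable {f : ℝ → E → E} {m : ℝ → ℝ}

lemma IsCaratheodory.intervalIntegrable_floor (hf : IsCaratheodory f m) (e : ℕ → E) (h x y : ℝ) :
    IntervalIntegrable (fun t ↦ f t (e ⌊t / h⌋₊)) volume x y := by
  refine (intervalIntegrable_of_locallyIntegrable hf.locallyIntegrable x y).mono_fun'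
    (AEStronglyMeasurable.restrict ?_) (ae_of_all _ fun t ↦ hf.norm_le t _)
  exact aestronglyMeasurable_of_countable (F := fun k t ↦ f t (e k)) (by fun_prop)
    fun k ↦ hf.aestronglyMeasurable (e k)

variable [NormedSpace ℝ E]

/-- `y` is a Carathéodory solution of `y' = f t y` on `[0, ∞)`. -/
structure IsCaratheodorySolution (f : ℝ → E → E) (y : ℝ → E) : Prop where
  continuous : Continuous y
  eq_add_integral : ∀ x, 0 ≤ x → y x = y 0 + ∫ t in 0..x, f t (y t)

/-- The nodes of the Euler polygon with step `h` issuing from `p` at time `0`. -/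
noncomputable def eulerNode (f : ℝ → E → E) (h : ℝ) (p : E) : ℕ → E
  | 0 => p
  | k + 1 => eulerNode f h p k + ∫ t in (k * h)..((k + 1 : ℕ) * h), f t (eulerNode f h p k)

/-- The Euler polygon with step `h` issuing from `p` at time `0`. On `(-∞, 0]` it is the integral
of `f · p`, because the natural floor of a negative number is `0`. -/
noncomputable def eulerPath (f : ℝ → E → E) (h : ℝ) (p : E) (x : ℝ) : E :=
  p + ∫ t in 0..x, f t (eulerNode f h p ⌊t / h⌋₊)

namespace IsCaratheodory

lemma continuous_eulerNode (hf : IsCaratheodory f m) (h : ℝ) (k : ℕ) :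
    Continuous fun p ↦ eulerNode f h p k := by
  induction k with
  | zero => exact continuous_id
  | succ k ih =>
    have hstep : Continuous fun q ↦ ∫ t in (k * h)..((k + 1 : ℕ) * h), f t q :=
      intervalIntegral.continuous_of_dominated_interval (bound := m)
        (fun q ↦ (hf.aestronglyMeasurable q).restrict)
        (fun q ↦ ae_of_all _ fun t _ ↦ hf.norm_le t q)
        (intervalIntegrable_of_locallyIntegrable hf.locallyIntegrable _ _)
        (ae_of_all _ fun t _ ↦ hf.continuous t)
    exact ih.add (hstep.comp ih)

lemma eulerPath_sub (hf : IsCaratheodory f m) (h : ℝ) (p : E) (x y : ℝ) :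
    eulerPath f h p y - eulerPath f h p x = ∫ t in x..y, f t (eulerNode f h p ⌊t / h⌋₊) := by
  rw [eulerPath, eulerPath, add_sub_add_left_eq_sub]
  exact intervalIntegral.integral_interval_sub_left (hf.intervalIntegrable_floor _ _ _ _)
    (hf.intervalIntegrable_floor _ _ _ _)

lemma dist_eulerPath_le (hf : IsCaratheodory f m) (h : ℝ) (p : E) (x y : ℝ) :
    dist (eulerPath f h p x) (eulerPath f h p y) ≤
      dist (∫ t in 0..x, m t) (∫ t in 0..y, m t) := by
  have hm := intervalIntegrable_of_locallyIntegrable hf.locallyIntegrable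
  rw [dist_comm, dist_comm (∫ t in 0..x, m t), dist_eq_norm, hf.eulerPath_sub, Real.dist_eq,
    intervalIntegral.integral_interval_sub_left (hm _ _) (hm _ _)]
  exact intervalIntegral.norm_integral_le_abs_of_norm_le (ae_of_all _ fun t ↦ hf.norm_le t _)
    (hm _ _)

lemma continuous_eulerPath (hf : IsCaratheodory f m) (h : ℝ) (p : E) :
    Continuous (eulerPath f h p) :=
  continuous_const.add <|
    intervalIntegral.continuous_primitive (hf.intervalIntegrable_floor _ h) 0

lemma eulerPath_natCast_mul (hf : IsCaratheodory f m) {h : ℝ} (hh : 0 < h) (p : E) (k : ℕ) :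
    eulerPath f h p (k * h) = eulerNode f h p k := by
  induction k with
  | zero => simp [eulerPath, eulerNode]
  | succ k ih =>
    rw [eulerNode, ← ih, ← sub_eq_iff_eq_add', hf.eulerPath_sub, ih]
    refine intervalIntegral.integral_congr_Ioo_of_le (by gcongr; simp) fun t ht ↦ ?_
    have hfloor : ⌊t / h⌋₊ = k := by
      rw [Nat.floor_eq_iff (div_nonneg (le_trans (by positivity) ht.1.le) hh.le), le_div_iff₀ hh,
        div_lt_iff₀ hh]
      exact ⟨ht.1.le, by exact_mod_cast ht.2⟩
    simp only [hfloor]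

lemma isCaratheodorySolution_of_tendsto_eulerPath (hf : IsCaratheodory f m) {h : ℕ → ℝ}
    (hh_pos : ∀ n, 0 < h n) (hh : Tendsto h atTop (𝓝 0)) {p : ℕ → E} {y : C(ℝ, E)}
    (hy : Tendsto (fun n ↦ (⟨_, hf.continuous_eulerPath (h n) (p n)⟩ : C(ℝ, E))) atTop (𝓝 y)) :
    IsCaratheodorySolution f y := by
  have heval {x : ℕ → ℝ} {c : ℝ} (hx : Tendsto x atTop (𝓝 c)) :
      Tendsto (fun n ↦ eulerPath f (h n) (p n) (x n)) atTop (𝓝 (y c)) := hy.eval hx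
  have hp : Tendsto p atTop (𝓝 (y 0)) := by
    simpa [eulerPath] using heval (tendsto_const_nhds (x := 0))
  have hnode {t : ℝ} (ht : 0 ≤ t) :
      Tendsto (fun n ↦ eulerNode f (h n) (p n) ⌊t / h n⌋₊) atTop (𝓝 (y t)) := by
    simp_rw [← fun n k ↦ hf.eulerPath_natCast_mul (hh_pos n) (p n) k]
    refine heval (tendsto_of_tendsto_of_tendsto_of_le_of_le (g := fun n ↦ t - h n) (h := fun _ ↦ t)
      ?_ tendsto_const_nhds (fun n ↦ ?_) fun n ↦ ?_)
    · simpa using hh.const_sub t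
    · have := Nat.lt_floor_add_one (t / h n)
      rw [div_lt_iff₀ (hh_pos n)] at this
      linarith
    · exact (le_div_iff₀ (hh_pos n)).1 (Nat.floor_le (div_nonneg ht (hh_pos n).le))
  refine ⟨y.continuous, fun x hx ↦ tendsto_nhds_unique (heval tendsto_const_nhds) (hp.add ?_)⟩
  refine intervalIntegral.tendsto_integral_filter_of_dominated_convergence m
    (.of_forall fun n ↦ (hf.intervalIntegrable_floor _ _ 0 x).def'.aestronglyMeasurable)
    (.of_forall fun n ↦ ae_of_all _ fun t _ ↦ hf.norm_le t _)
    (intervalIntegrable_of_locallyIntegrable hf.locallyIntegrable _ _) (ae_of_all _ fun t ht ↦ ?_)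
  rw [uIoc_of_le hx] at ht
  exact ((hf.continuous t).tendsto _).comp (hnode ht.1.le)

theorem exists_continuous_forall_mem (hf : IsCaratheodory f m) [ProperSpace E] {Q : Set E}
    (hQ : IsCompact Q) {U : Set (E × E)} (hU : IsOpen U) {T : ℝ} (hT : 0 < T)
    (hQU : ∀ y, IsCaratheodorySolution f y → y 0 ∈ Q → (y 0, y T) ∈ U) :
    ∃ F : E → E, Continuous F ∧ ∀ p ∈ Q, (p, F p) ∈ U := by
  by_contra! hF
  let h (n : ℕ) : ℝ := T / (n + 1 : ℕ)
  have hh_pos (n : ℕ) : 0 < h n := by positivity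
  choose p hpQ hpU using fun n : ℕ ↦ hF _ (hf.continuous_eulerNode (h n) (n + 1))
  let v (n : ℕ) : C(ℝ, E) := ⟨_, hf.continuous_eulerPath (h n) (p n)⟩
  have hv₀ (n : ℕ) : v n 0 = p n := by simp [v, eulerPath]
  have hv_end (n : ℕ) : v n T = eulerNode f (h n) (p n) (n + 1) := by
    have hnT : ((n + 1 : ℕ) : ℝ) * h n = T := mul_div_cancel₀ T (by positivity)
    rw [← hf.eulerPath_natCast_mul (hh_pos n), hnT]; rfl
  obtain ⟨y, ⟨hy₀, -⟩, φ, hφ, hy⟩ := (isCompact_setOf_dist_le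
    (intervalIntegral.continuous_primitive
      (intervalIntegrable_of_locallyIntegrable hf.locallyIntegrable) 0) 0 hQ).tendsto_subseq
    (x := v) fun n ↦ ⟨(hv₀ n).symm ▸ hpQ n, hf.dist_eulerPath_le (h n) (p n)⟩
  have hh : Tendsto (h ∘ φ) atTop (𝓝 0) :=
    ((tendsto_const_div_atTop_nhds_zero_nat T).comp (tendsto_add_atTop_nat 1)).comp
      hφ.tendsto_atTop
  have hsol := hf.isCaratheodorySolution_of_tendsto_eulerPath (fun n ↦ hh_pos (φ n)) hh hy
  have hlim (x : ℝ) : Tendsto (fun n ↦ v (φ n) x) atTop (𝓝 (y x)) := hy.eval tendsto_const_nhds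
  obtain ⟨n, hn⟩ := (((hlim 0).prodMk_nhds (hlim T)).eventually
    (hU.mem_nhds (hQU y hsol hy₀))).exists
  exact hpU (φ n) (by rw [← hv_end, ← hv₀]; exact hn)

end IsCaratheodory
end Caratheodory

section IntegralInequalities

lemma norm_le_mul_exp_of_norm_le_add_integral_right {E : Type*} [SeminormedAddCommGroup E]
    {f : ℝ → E} {a x Q K : ℝ} (hf : Continuous f) (hK : 0 ≤ K) (hax : a ≤ x)
    (h : ∀ y ∈ Icc a x, ‖f y‖ ≤ Q + K * ∫ t in a..y, ‖f t‖) :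
    ‖f x‖ ≤ Q * Real.exp (K * (x - a)) := by
  have hderiv (y : ℝ) : HasDerivAt (fun y ↦ Q + K * ∫ t in a..y, ‖f t‖) (K * ‖f y‖) y :=
    ((hf.norm.integral_hasStrictDerivAt a y).hasDerivAt.const_mul K).const_add Q
  have hQ : 0 ≤ Q := by simpa using (norm_nonneg _).trans (h a ⟨le_rfl, hax⟩)
  have hle := norm_le_gronwallBound_of_norm_deriv_right_le (δ := Q) (K := K) (ε := 0)
    (fun y _ ↦ (hderiv y).continuousAt.continuousWithinAt)
    (fun y _ ↦ (hderiv y).hasDerivWithinAt)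
    (by simp [abs_of_nonneg hQ]) (fun y hy ↦ by
      rw [add_zero, norm_mul, norm_norm, Real.norm_of_nonneg hK]
      exact mul_le_mul_of_nonneg_left ((h y (Ico_subset_Icc_self hy)).trans (le_abs_self _)) hK)
    x ⟨hax, le_rfl⟩
  rw [gronwallBound_ε0] at hle
  exact (h x ⟨hax, le_rfl⟩).trans ((le_abs_self _).trans hle)

theorem norm_le_mul_exp_of_norm_le_add_integral {E : Type*} [SeminormedAddCommGroup E]
    {f : ℝ → E} {a x Q K : ℝ} (hf : Continuous f) (hK : 0 ≤ K)
    (h : ∀ y ∈ uIcc a x, ‖f y‖ ≤ Q + K * |∫ t in a..y, ‖f t‖|) :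
    ‖f x‖ ≤ Q * Real.exp (K * |x - a|) := by
  rcases le_total a x with hax | hxa
  · rw [abs_of_nonneg (sub_nonneg.2 hax)]
    refine norm_le_mul_exp_of_norm_le_add_integral_right hf hK hax fun y hy ↦ ?_
    have := h y (uIcc_of_le hax ▸ hy)
    rwa [abs_of_nonneg (intervalIntegral.integral_nonneg hy.1 fun _ _ ↦ norm_nonneg _)] at this
  · have := norm_le_mul_exp_of_norm_le_add_integral_right (f := fun y ↦ f (-y)) (a := -a) (x := -x)
      (Q := Q) (hf.comp continuous_neg) hK (neg_le_neg hxa) fun y hy ↦ by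
        have hy' : -y ∈ Icc x a := ⟨le_neg_of_le_neg hy.2, neg_le.1 hy.1⟩
        have := h (-y) (uIcc_of_ge hxa ▸ hy')
        rwa [intervalIntegral.integral_symm, abs_neg, abs_of_nonneg
          (intervalIntegral.integral_nonneg hy'.2 fun _ _ ↦ norm_nonneg _),
          ← neg_neg a, ← intervalIntegral.integral_comp_neg] at this
    rwa [neg_neg, neg_sub_neg, ← neg_sub x a, ← abs_of_nonpos (sub_nonpos.2 hxa)] at this

theorem le_inv_of_add_integral_sq_le {f : ℝ → ℝ} {a b v₀ : ℝ} (hf : Continuous f) (hab : a < b)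
    (h : ∀ x ∈ Icc a b, v₀ + ∫ t in a..x, f t ^ 2 ≤ f x) : v₀ ≤ (b - a)⁻¹ := by
  rcases le_or_gt v₀ 0 with hv₀ | hv₀
  · exact hv₀.trans (inv_nonneg.2 (sub_nonneg.2 hab.le))
  -- The left-hand side `v` satisfies `v' = f ^ 2 ≥ v ^ 2`, so `x + 1 / v` decreases.
  set v : ℝ → ℝ := fun x ↦ v₀ + ∫ t in a..x, f t ^ 2 with hv
  have hv_pos {x} (hx : x ∈ Icc a b) : 0 < v x :=
    add_pos_of_pos_of_nonneg hv₀ (intervalIntegral.integral_nonneg hx.1 fun _ _ ↦ sq_nonneg _)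
  have hderiv {x} (hx : x ∈ Icc a b) :
      HasDerivAt (fun x ↦ x + (v x)⁻¹) (1 + -(f x ^ 2) / v x ^ 2) x :=
    (hasDerivAt_id x).add
      ((((hf.pow 2).integral_hasStrictDerivAt a x).hasDerivAt.const_add v₀).inv (hv_pos hx).ne')
  have hanti : AntitoneOn (fun x ↦ x + (v x)⁻¹) (Icc a b) := by
    refine antitoneOn_of_deriv_nonpos (convex_Icc a b)
      (fun x hx ↦ (hderiv hx).continuousAt.continuousWithinAt)
      (fun x hx ↦ (hderiv (interior_subset hx)).differentiableAt.differentiableWithinAt)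
      fun x hx ↦ ?_
    have hx := interior_subset hx
    have : 1 ≤ f x ^ 2 / v x ^ 2 := by
      rw [one_le_div (pow_pos (hv_pos hx) 2)]
      exact pow_le_pow_left₀ (hv_pos hx).le (h x hx) 2
    rw [(hderiv hx).deriv, neg_div]
    linarith
  have hends : b + (v b)⁻¹ ≤ a + (v a)⁻¹ := hanti ⟨le_rfl, hab.le⟩ ⟨hab.le, le_rfl⟩ hab.le
  have hvb : 0 < (v b)⁻¹ := inv_pos.2 (hv_pos ⟨hab.le, le_rfl⟩)
  have hva : v a = v₀ := by simp [hv]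
  rw [le_inv_comm₀ hv₀ (sub_pos.2 hab)]
  rw [hva] at hends
  linarith

lemma exists_lt_lt_integral_pos {a : ℝ → ℝ} {x₁ x₂ : ℝ} (hx : x₁ ≤ x₂)
    (ha : IntervalIntegrable a volume x₁ x₂) (hpos : 0 < ∫ x in x₁..x₂, a x) :
    ∃ c d, x₁ < c ∧ c < d ∧ d < x₂ ∧ 0 < ∫ x in c..d, a x := by
  have hlt : x₁ < x₂ := hx.lt_of_ne (by rintro rfl; simp at hpos)
  obtain ⟨c, hc_pos, hc⟩ : ∃ c, (0 < ∫ x in c..x₂, a x) ∧ c ∈ Ioo x₁ x₂ := by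
    have hcont := intervalIntegral.continuousOn_primitive_interval_left
      (((intervalIntegrable_iff_integrableOn_Icc_of_le hx).1 ha).mono_set (uIcc_of_le hx).subset)
      x₁ left_mem_uIcc
    rw [uIcc_of_le hx] at hcont
    have hnear := (hcont.mono Ioo_subset_Icc_self).eventually (lt_mem_nhds hpos)
    have := left_nhdsWithin_Ioo_neBot hlt
    exact (hnear.and self_mem_nhdsWithin).exists
  obtain ⟨d, hd_pos, hd⟩ : ∃ d, (0 < ∫ x in c..d, a x) ∧ d ∈ Ioo c x₂ := by
    have hac : IntervalIntegrable a volume c x₂ := ha.mono_set (by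
      rw [uIcc_of_le hc.2.le, uIcc_of_le hx]; exact Icc_subset_Icc_left hc.1.le)
    have hcont := intervalIntegral.continuousOn_primitive_interval' hac left_mem_uIcc
      x₂ right_mem_uIcc
    rw [uIcc_of_le hc.2.le] at hcont
    have hnear := (hcont.mono Ioo_subset_Icc_self).eventually (lt_mem_nhds hc_pos)
    have := right_nhdsWithin_Ioo_neBot hc.2
    exact (hnear.and self_mem_nhdsWithin).exists
  exact ⟨c, d, hc.1, hd.1, hd.2, hd_pos⟩

end IntegralInequalities

section TruncatedSystem

lemma abs_integral_mul_le {b f : ℝ → ℝ} {T D x y : ℝ} (hb : IntervalIntegrable b volume 0 T)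
    (hf : ∀ t ∈ Icc 0 T, |f t| ≤ D) (hx : x ∈ Icc 0 T) (hy : y ∈ Icc 0 T) :
    |∫ t in x..y, b t * f t| ≤ D * ∫ t in 0..T, |b t| := by
  have hT : 0 ≤ T := hx.1.trans hx.2
  have hD : 0 ≤ D := (abs_nonneg _).trans (hf x hx)
  have hsub : uIoc x y ⊆ Ioc 0 T := Ioc_subset_Ioc (le_min hx.1 hy.1) (max_le hx.2 hy.2)
  have hint : IntegrableOn (fun t ↦ D * |b t|) (Ioc 0 T) :=
    ((intervalIntegrable_iff_integrableOn_Ioc_of_le hT).1 hb).abs.const_mul D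
  rw [← intervalIntegral.integral_const_mul, intervalIntegral.integral_of_le hT,
    ← Real.norm_eq_abs]
  refine intervalIntegral.norm_integral_le_integral_norm_uIoc.trans ?_
  refine (integral_mono_of_nonneg (.of_forall fun _ ↦ norm_nonneg _) (hint.mono_set hsub)
    ((ae_restrict_mem measurableSet_uIoc).mono fun t ht ↦ ?_)).trans
    (setIntegral_mono_set hint (.of_forall fun _ ↦ by positivity) hsub.eventuallyLE)
  beta_reduce
  rw [norm_mul, mul_comm]
  exact mul_le_mul_of_nonneg_right (hf t (Ioc_subset_Icc_self (hsub ht))) (abs_nonneg _)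

/-- The projection of `z` onto the interval `[-K, K]`, for `0 ≤ K`. -/
def truncate (K z : ℝ) : ℝ := max (-K) (min K z)

lemma continuous_truncate (K : ℝ) : Continuous (truncate K) := by unfold truncate; fun_prop

lemma truncate_eq_self {K z : ℝ} (h : |z| ≤ K) : truncate K z = z := by
  rw [truncate, min_eq_right (abs_le.1 h).2, max_eq_right (abs_le.1 h).1]

lemma abs_truncate_le {K : ℝ} (hK : 0 ≤ K) (z : ℝ) : |truncate K z| ≤ K :=
  abs_le.2 ⟨le_max_left _ _, max_le (by linarith) (min_le_left _ _)⟩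

lemma abs_truncate_le_abs {K : ℝ} (hK : 0 ≤ K) (z : ℝ) : |truncate K z| ≤ |z| := by
  refine abs_le.2 ⟨?_, max_le ((neg_nonpos.2 hK).trans (abs_nonneg z))
    ((min_le_right _ _).trans (le_abs_self z))⟩
  rcases le_total K z with h | h
  · exact (neg_nonpos.2 (abs_nonneg z)).trans (by simp [truncate, h, hK])
  · exact (neg_abs_le z).trans (by simp [truncate, h])

lemma truncate_pos {K z : ℝ} (hK : 0 < K) (hz : 0 < z) : 0 < truncate K z :=
  lt_max_of_lt_right (lt_min hK hz)

lemma truncate_neg {K z : ℝ} (hK : 0 < K) (hz : z < 0) : truncate K z < 0 :=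
  max_lt (neg_neg_of_pos hK) (min_lt_of_right_lt hz)

lemma eq_zero_of_truncate_eq_zero {K z : ℝ} (hK : 0 < K) (h : truncate K z = 0) : z = 0 := by
  rcases lt_trichotomy z 0 with hz | hz | hz
  exacts [((truncate_neg hK hz).ne h).elim, hz, ((truncate_pos hK hz).ne' h).elim]

/-- `(w, z)` solves on `[0, T]` the system `w' = z`, `z' = -z² - b(x) φ(w)`, in integral form and
with `z` replaced by `truncate K z` on the right-hand sides. -/
structure IsTruncatedSolution (T K : ℝ) (b φ w z : ℝ → ℝ) : Prop where
  continuous_fst : Continuous w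
  continuous_snd : Continuous z
  intervalIntegrable : IntervalIntegrable (fun t ↦ b t * φ (w t)) volume 0 T
  fst_eq : ∀ x ∈ Icc 0 T, w x = w 0 + ∫ t in 0..x, truncate K (z t)
  snd_eq : ∀ x ∈ Icc 0 T, z x = z 0 - ∫ t in 0..x, (truncate K (z t) ^ 2 + b t * φ (w t))

variable {T K D x y x₀ : ℝ} {b φ w z : ℝ → ℝ}

/-- The vector field of the system in `IsTruncatedSolution`, with `b` extended by zero. -/
noncomputable def truncatedField (T K : ℝ) (b φ : ℝ → ℝ) (t : ℝ) (y : ℝ × ℝ) : ℝ × ℝ :=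
  (truncate K y.2, -(truncate K y.2 ^ 2 + (Ioc 0 T).indicator b t * φ y.1))

lemma isCaratheodory_truncatedField {C : ℝ} (hT : 0 ≤ T) (hK : 0 ≤ K)
    (hb : IntervalIntegrable b volume 0 T) (hφ : Continuous φ) (hC : ∀ s, |φ s| ≤ C) :
    IsCaratheodory (truncatedField T K b φ)
      fun t ↦ K + (K ^ 2 + |(Ioc 0 T).indicator b t| * C) := by
  have hb' : Integrable ((Ioc 0 T).indicator b) :=
    ((intervalIntegrable_iff_integrableOn_Ioc_of_le hT).1 hb).integrable_indicator
      measurableSet_Ioc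
  have hτ := continuous_truncate K
  refine ⟨fun y ↦ ?_, fun t ↦ ?_, fun t y ↦ norm_prod_le_iff.2 ⟨?_, ?_⟩, ?_⟩
  · exact aestronglyMeasurable_const.prodMk
      (aestronglyMeasurable_const.add (hb'.aestronglyMeasurable.mul_const _)).neg
  · unfold truncatedField; fun_prop
  · have hC₀ : 0 ≤ C := (abs_nonneg _).trans (hC 0)
    exact (abs_truncate_le hK _).trans (le_add_of_nonneg_right (by positivity))
  · refine le_add_of_nonneg_of_le hK ?_
    rw [truncatedField, norm_neg]
    refine (norm_add_le _ _).trans (add_le_add ?_ ?_)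
    · rw [norm_pow]
      exact pow_le_pow_left₀ (norm_nonneg _) (abs_truncate_le hK _) 2
    · rw [norm_mul]
      exact mul_le_mul_of_nonneg_left (hC _) (norm_nonneg _)
  · exact (locallyIntegrable_const K).add
      ((locallyIntegrable_const _).add (hb'.abs.mul_const C).locallyIntegrable)

lemma IsCaratheodorySolution.isTruncatedSolution {y : ℝ → ℝ × ℝ}
    (hy : IsCaratheodorySolution (truncatedField T K b φ) y)
    (hb : IntervalIntegrable b volume 0 T) (hφ : Continuous φ) :
    IsTruncatedSolution T K b φ (fun t ↦ (y t).1) (fun t ↦ (y t).2) := by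
  have hw := hy.continuous.fst
  have hz := hy.continuous.snd
  have hτ := (continuous_truncate K).comp hz
  have hbφ : IntervalIntegrable (fun t ↦ b t * φ (y t).1) volume 0 T :=
    hb.mul_continuousOn (hφ.comp hw).continuousOn
  have hpair {x} (hx : x ∈ Icc 0 T) : y x = y 0 + ∫ t in Ioc 0 x,
      (truncate K (y t).2, -(truncate K (y t).2 ^ 2 + b t * φ (y t).1)) := by
    rw [hy.eq_add_integral x hx.1, intervalIntegral.integral_of_le hx.1]
    refine congrArg (y 0 + ·) (setIntegral_congr_fun measurableSet_Ioc fun t ht ↦ ?_)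
    have htT : t ∈ Ioc 0 T := ⟨ht.1, ht.2.trans hx.2⟩
    simp only [truncatedField, indicator_of_mem htT]
  have hint {x} (hx : x ∈ Icc 0 T) : IntegrableOn (fun t ↦
      (truncate K (y t).2, -(truncate K (y t).2 ^ 2 + b t * φ (y t).1))) (Ioc 0 x) :=
    hτ.integrableOn_Ioc.prodMk
      ((hτ.pow 2).integrableOn_Ioc.add (hbφ.1.mono_set (Ioc_subset_Ioc_right hx.2))).neg
  refine ⟨hw, hz, hbφ, fun x hx ↦ ?_, fun x hx ↦ ?_⟩
  · rw [hpair hx, Prod.fst_add, fst_integral (hint hx), intervalIntegral.integral_of_le hx.1]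
  · rw [hpair hx, Prod.snd_add, snd_integral (hint hx), intervalIntegral.integral_of_le hx.1,
      integral_neg, sub_eq_add_neg]

theorem exists_continuous_forall_mem_of_isTruncatedSolution {C : ℝ} (hT : 0 < T) (hK : 0 ≤ K)
    (hb : IntervalIntegrable b volume 0 T) (hφ : Continuous φ) (hC : ∀ s, |φ s| ≤ C)
    {Q : Set (ℝ × ℝ)} (hQ : IsCompact Q) {U : Set ((ℝ × ℝ) × (ℝ × ℝ))} (hU : IsOpen U)
    (hQU : ∀ w z, IsTruncatedSolution T K b φ w z → (w 0, z 0) ∈ Q →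
      ((w 0, z 0), (w T, z T)) ∈ U) :
    ∃ F : ℝ × ℝ → ℝ × ℝ, Continuous F ∧ ∀ p ∈ Q, (p, F p) ∈ U :=
  (isCaratheodory_truncatedField hT.le hK hb hφ hC).exists_continuous_forall_mem hQ hU hT
    fun _ hy ↦ hQU _ _ (hy.isTruncatedSolution hb hφ)

namespace IsTruncatedSolution

lemma intervalIntegrable_sq (h : IsTruncatedSolution T K b φ w z) (x y : ℝ) :
    IntervalIntegrable (fun t ↦ truncate K (z t) ^ 2) volume x y :=
  (((continuous_truncate K).comp h.continuous_snd).pow 2).intervalIntegrable x y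

lemma intervalIntegrable_mul (h : IsTruncatedSolution T K b φ w z) (hx : x ∈ Icc 0 T)
    (hy : y ∈ Icc 0 T) : IntervalIntegrable (fun t ↦ b t * φ (w t)) volume x y :=
  h.intervalIntegrable.mono_set <| by
    rw [uIcc_of_le (hx.1.trans hx.2)]; exact ordConnected_Icc.uIcc_subset hx hy

lemma snd_sub (h : IsTruncatedSolution T K b φ w z) (hx : x ∈ Icc 0 T) (hy : y ∈ Icc 0 T) :
    z x - z y = (∫ t in x..y, truncate K (z t) ^ 2) + ∫ t in x..y, b t * φ (w t) := by
  have h0 : (0 : ℝ) ∈ Icc 0 T := ⟨le_rfl, hx.1.trans hx.2⟩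
  have hint {x y} (hx : x ∈ Icc 0 T) (hy : y ∈ Icc 0 T) :=
    (h.intervalIntegrable_sq x y).add (h.intervalIntegrable_mul hx hy)
  rw [h.snd_eq x hx, h.snd_eq y hy, sub_sub_sub_cancel_left,
    intervalIntegral.integral_interval_sub_left (hint h0 hy) (hint h0 hx),
    intervalIntegral.integral_add (h.intervalIntegrable_sq x y) (h.intervalIntegrable_mul hx hy)]

lemma abs_fst_sub_le (h : IsTruncatedSolution T K b φ w z)
    (hD : ∀ t ∈ Icc 0 T, |truncate K (z t)| ≤ D) (hx : x ∈ Icc 0 T) : |w x - w 0| ≤ D * T := by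
  rw [h.fst_eq x hx, add_sub_cancel_left, ← Real.norm_eq_abs]
  refine (intervalIntegral.norm_integral_le_of_norm_le_const fun t ht ↦ ?_).trans <|
    mul_le_mul_of_nonneg_left (b := |x - 0|) ?_ ((abs_nonneg _).trans (hD x hx))
  · rw [uIoc_of_le hx.1] at ht
    exact hD t ⟨ht.1.le, ht.2.trans hx.2⟩
  · rw [sub_zero, abs_of_nonneg hx.1]
    exact hx.2

lemma snd_le_add (h : IsTruncatedSolution T K b φ w z) (hb : IntervalIntegrable b volume 0 T)
    (hD : ∀ t ∈ Icc 0 T, |φ (w t)| ≤ D) (hx : x ∈ Icc 0 T) (hy : y ∈ Icc 0 T) (hxy : x ≤ y) :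
    z y ≤ z x + D * ∫ t in 0..T, |b t| := by
  have hsq : 0 ≤ ∫ t in x..y, truncate K (z t) ^ 2 :=
    intervalIntegral.integral_nonneg hxy fun _ _ ↦ sq_nonneg _
  linarith [h.snd_sub hx hy, neg_le_of_abs_le (abs_integral_mul_le hb hD hx hy)]

lemma abs_snd_sub_le (h : IsTruncatedSolution T K b φ w z) (hK : 0 ≤ K)
    (hb : IntervalIntegrable b volume 0 T) (hD : ∀ t ∈ Icc 0 T, |φ (w t)| ≤ D)
    (hx : x ∈ Icc 0 T) (hy : y ∈ Icc 0 T) :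
    |z x - z y| ≤ K ^ 2 * T + D * ∫ t in 0..T, |b t| := by
  rw [h.snd_sub hx hy]
  refine (abs_add_le _ _).trans (add_le_add ?_ (abs_integral_mul_le hb hD hx hy))
  rw [← Real.norm_eq_abs]
  refine (intervalIntegral.norm_integral_le_of_norm_le_const (C := K ^ 2) fun t _ ↦ ?_).trans ?_
  · rw [norm_pow]
    exact pow_le_pow_left₀ (norm_nonneg _) (abs_truncate_le hK _) 2
  · exact mul_le_mul_of_nonneg_left
      (abs_sub_le_iff.2 ⟨by linarith [hx.1, hy.2], by linarith [hx.2, hy.1]⟩) (sq_nonneg K)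

lemma abs_snd_le (h : IsTruncatedSolution T K b φ w z) (hb : IntervalIntegrable b volume 0 T)
    (hD : ∀ t ∈ Icc 0 T, |φ (w t)| ≤ D) (hx₀ : x₀ ∈ Icc 0 T) (hz : z x₀ = 0) (hzT : z 0 ≤ z T)
    (hx : x ∈ Icc 0 T) : |z x| ≤ 2 * (D * ∫ t in 0..T, |b t|) := by
  have hT : 0 ≤ T := hx.1.trans hx.2
  have hle {x y} := h.snd_le_add hb hD (x := x) (y := y)
  have : 0 ≤ D * ∫ t in 0..T, |b t| :=
    (abs_nonneg _).trans (abs_integral_mul_le hb hD hx hx₀)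
  have h₁ := hle hx₀ ⟨hT, le_rfl⟩ hx₀.2
  have h₂ := hle ⟨le_rfl, hT⟩ hx₀ hx₀.1
  have h₃ := hle ⟨le_rfl, hT⟩ hx hx.1
  have h₄ := hle hx ⟨hT, le_rfl⟩ hx.2
  rcases le_total x x₀ with hxx₀ | hxx₀
  · exact abs_le.2 ⟨by linarith [hle hx hx₀ hxx₀], by linarith⟩
  · exact abs_le.2 ⟨by linarith, by linarith [hle hx₀ hx hxx₀]⟩

lemma abs_snd_le_mul_exp (h : IsTruncatedSolution T K b φ w z) (hK : 0 ≤ K)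
    (hb : IntervalIntegrable b volume 0 T) (hD : ∀ t ∈ Icc 0 T, |φ (w t)| ≤ D)
    (hx₀ : x₀ ∈ Icc 0 T) (hz : z x₀ = 0) (hx : x ∈ Icc 0 T) :
    |z x| ≤ D * ((∫ t in 0..T, |b t|) * Real.exp (K * T)) := by
  have hN : 0 ≤ D * ∫ t in 0..T, |b t| :=
    (abs_nonneg _).trans (abs_integral_mul_le hb hD hx hx₀)
  rw [← mul_assoc]
  refine (norm_le_mul_exp_of_norm_le_add_integral (a := x₀) h.continuous_snd hK
    fun y hy ↦ ?_).trans (mul_le_mul_of_nonneg_left (Real.exp_le_exp.2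
      (mul_le_mul_of_nonneg_left (abs_sub_le_iff.2 ⟨?_, ?_⟩) hK)) hN)
  · have hy : y ∈ Icc 0 T := ordConnected_Icc.uIcc_subset hx₀ hx hy
    have hg : Continuous fun t ↦ K * ‖z t‖ := continuous_const.mul h.continuous_snd.norm
    have hsq : ‖∫ t in x₀..y, truncate K (z t) ^ 2‖ ≤ K * |∫ t in x₀..y, ‖z t‖| := by
      rw [← abs_of_nonneg hK, ← abs_mul, abs_of_nonneg hK, ← intervalIntegral.integral_const_mul]
      refine intervalIntegral.norm_integral_le_abs_of_norm_le (.of_forall fun t ↦ ?_)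
        (hg.intervalIntegrable x₀ y)
      rw [sq, norm_mul]
      exact mul_le_mul (abs_truncate_le hK _) (abs_truncate_le_abs hK _) (abs_nonneg _) hK
    have hzy := h.snd_sub hx₀ hy
    rw [hz, zero_sub] at hzy
    rw [← norm_neg, hzy, add_comm (D * _)]
    exact (abs_add_le _ _).trans (add_le_add hsq (abs_integral_mul_le hb hD hx₀ hy))
  · linarith [hx.2, hx₀.1]
  · linarith [hx.1, hx₀.2]

end IsTruncatedSolution
end TruncatedSystem

section Asymptotics

open scoped Topology

variable {T K C D ε κ x y c d x₀ x₁ x₂ : ℝ} {b φ w z : ℝ → ℝ}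

namespace IsTruncatedSolution

lemma abs_fst_sub_le_mul_exp (h : IsTruncatedSolution T K b φ w z) (hK : 0 ≤ K)
    (hb : IntervalIntegrable b volume 0 T) (hD : ∀ t ∈ Icc 0 T, |φ (w t)| ≤ D)
    (hx₀ : x₀ ∈ Icc 0 T) (hz : z x₀ = 0) (hx : x ∈ Icc 0 T) :
    |w x - w 0| ≤ D * ((∫ t in 0..T, |b t|) * Real.exp (K * T)) * T :=
  h.abs_fst_sub_le (fun t ht ↦ (abs_truncate_le_abs hK (z t)).trans
    (h.abs_snd_le_mul_exp hK hb hD hx₀ hz ht)) hx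

lemma snd_zero_sub_snd_le (h : IsTruncatedSolution T K b φ w z) (hK : 0 ≤ K)
    (hb : IntervalIntegrable b volume 0 T) (hφ : 0 < φ (w 0)) (hε : ε ≤ 1)
    (hosc : ∀ t ∈ Icc 0 T, |φ (w t) / φ (w 0) - 1| ≤ ε) (hx₀ : x₀ ∈ Icc 0 T) (hz : z x₀ = 0) :
    z 0 - z T ≤ φ (w 0) * ((∫ t in 0..T, b t) + ε * (∫ t in 0..T, |b t|) +
      4 * T * ((∫ t in 0..T, |b t|) * Real.exp (K * T)) ^ 2 * φ (w 0)) := by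
  set N := (∫ t in 0..T, |b t|) * Real.exp (K * T)
  have hT : 0 ≤ T := hx₀.1.trans hx₀.2
  have h0 : (0 : ℝ) ∈ Icc 0 T := ⟨le_rfl, hT⟩
  have hTT : T ∈ Icc 0 T := ⟨hT, le_rfl⟩
  have hsub {t} (ht : t ∈ Icc 0 T) : |φ (w t) - φ (w 0)| ≤ ε * φ (w 0) := by
    rw [← div_le_iff₀ hφ, ← abs_of_pos hφ, ← abs_div, abs_of_pos hφ, sub_div, div_self hφ.ne']
    exact hosc t ht
  have hD {t} (ht : t ∈ Icc 0 T) : |φ (w t)| ≤ 2 * φ (w 0) := by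
    have := mul_le_mul_of_nonneg_right hε hφ.le
    obtain ⟨h₁, h₂⟩ := abs_le.1 (hsub ht)
    exact abs_le.2 ⟨by linarith, by linarith⟩
  have hsq : ∫ t in 0..T, truncate K (z t) ^ 2 ≤ T * (2 * φ (w 0) * N) ^ 2 := by
    have := intervalIntegral.integral_mono_on hT (h.intervalIntegrable_sq 0 T)
      (intervalIntegrable_const (c := (2 * φ (w 0) * N) ^ 2)) fun t ht ↦ sq_le_sq' ?_ ?_
    · simpa using this
    all_goals
      have := abs_le.1 ((abs_truncate_le_abs hK (z t)).trans
        (h.abs_snd_le_mul_exp hK hb (fun _ ↦ hD) hx₀ hz ht))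
    exacts [this.1, this.2]
  have hosc_int : ∫ t in 0..T, b t * (φ (w t) - φ (w 0)) ≤ ε * φ (w 0) * ∫ t in 0..T, |b t| :=
    (le_abs_self _).trans (abs_integral_mul_le hb (fun _ ↦ hsub) h0 hTT)
  simp only [mul_sub] at hosc_int
  rw [intervalIntegral.integral_sub h.intervalIntegrable (hb.mul_const _),
    intervalIntegral.integral_mul_const] at hosc_int
  rw [h.snd_sub h0 hTT]
  linarith

end IsTruncatedSolution

lemma eventually_atBot_abs_div_sub_one_le (hK : 0 ≤ K) (hb : IntervalIntegrable b volume 0 T)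
    (hbot : Tendsto φ atBot (𝓝 0))
    (hosc : ∀ ε > 0, ∃ η > 0, ∀ᶠ s in atBot, ∀ r, |r - s| < η → |φ r / φ s - 1| < ε)
    (hε : 0 < ε) :
    ∀ᶠ s in atBot, ∀ w z, IsTruncatedSolution T K b φ w z → w 0 = s → ∀ x₀ ∈ Icc 0 T, z x₀ = 0 →
      ∀ t ∈ Icc 0 T, |φ (w t) / φ s - 1| ≤ ε := by
  obtain ⟨η, hη, hosc⟩ := hosc ε hε
  obtain ⟨δ, hδ, hδη⟩ : ∃ δ > 0, δ * ((∫ t in 0..T, |b t|) * Real.exp (K * T)) * T < η := by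
    have htend : Tendsto (fun δ ↦ δ * ((∫ t in 0..T, |b t|) * Real.exp (K * T)) * T)
        (𝓝[>] 0) (𝓝 0) :=
      ((Continuous.tendsto' (by fun_prop) 0 0 (by simp)).mono_left nhdsWithin_le_nhds)
    exact (eventually_mem_nhdsWithin.and (htend.eventually (gt_mem_nhds hη))).exists
  obtain ⟨V, hV⟩ := eventually_atBot.1 (hbot.abs.eventually (gt_mem_nhds (abs_zero.trans_lt hδ)))
  filter_upwards [hosc, eventually_le_atBot (V - K * T)] with s hs hsV w z h hw₀ x₀ hx₀ hz t ht
  have hwV {t} (ht : t ∈ Icc 0 T) : w t ≤ V := by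
    have := abs_le.1 (h.abs_fst_sub_le (fun t _ ↦ abs_truncate_le hK (z t)) ht)
    linarith
  refine (hs _ (hw₀ ▸ (h.abs_fst_sub_le_mul_exp hK hb (fun t ht ↦ ?_) hx₀ hz ht).trans_lt hδη)).le
  exact (hV _ (hwV ht)).le

theorem eventually_atBot_snd_zero_lt (hK : 0 ≤ K) (hb : IntervalIntegrable b volume 0 T)
    (hneg : ∫ t in 0..T, b t < 0) (hφ : ∀ s, 0 < φ s) (hbot : Tendsto φ atBot (𝓝 0))
    (hosc : ∀ ε > 0, ∃ η > 0, ∀ᶠ s in atBot, ∀ r, |r - s| < η → |φ r / φ s - 1| < ε) :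
    ∀ᶠ s in atBot, ∀ w z, IsTruncatedSolution T K b φ w z → w 0 = s → ∀ x₀ ∈ Icc 0 T, z x₀ = 0 →
      z 0 < z T := by
  set B := ∫ t in 0..T, |b t|
  obtain ⟨ε, ⟨hε₀, hε₁⟩, hε⟩ : ∃ ε ∈ Ioc (0 : ℝ) 1, (∫ t in 0..T, b t) + ε * B < 0 := by
    have htend : Tendsto (fun ε ↦ (∫ t in 0..T, b t) + ε * B) (𝓝[>] 0) (𝓝 (∫ t in 0..T, b t)) :=
      (Continuous.tendsto' (by fun_prop) _ _ (by simp)).mono_left nhdsWithin_le_nhds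
    have hIoc : ∀ᶠ ε in 𝓝[>] (0 : ℝ), ε ∈ Ioc 0 1 := Ioc_mem_nhdsGT one_pos
    exact (hIoc.and (htend.eventually (gt_mem_nhds hneg))).exists
  have hsmall : ∀ᶠ s in atBot, (∫ t in 0..T, b t) + ε * B +
      4 * T * (B * Real.exp (K * T)) ^ 2 * φ s < 0 := by
    have := (hbot.const_mul (4 * T * (B * Real.exp (K * T)) ^ 2)).const_add
      ((∫ t in 0..T, b t) + ε * B)
    rw [mul_zero, add_zero] at this
    exact this.eventually (gt_mem_nhds hε)
  filter_upwards [hsmall, eventually_atBot_abs_div_sub_one_le hK hb hbot hosc hε₀]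
    with s hs hratio w z h hw₀ x₀ hx₀ hz
  subst hw₀
  refine sub_neg.1 <| (h.snd_zero_sub_snd_le hK hb (hφ _) hε₁ (hratio w z h rfl x₀ hx₀ hz) hx₀
    hz).trans_lt (mul_neg_of_pos_of_neg (hφ _) hs)

namespace IsTruncatedSolution

lemma integral_sq_le_sub (h : IsTruncatedSolution T K b φ w z) (hzK : ∀ t ∈ Icc 0 T, |z t| ≤ K)
    (hφ : ∀ s, 0 ≤ φ s) (hx : x ∈ Icc 0 T) (hy : y ∈ Icc 0 T) (hxy : x ≤ y)
    (hb : ∀ᵐ t ∂volume.restrict (Icc x y), 0 ≤ b t) : ∫ t in x..y, z t ^ 2 ≤ z x - z y := by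
  rw [h.snd_sub hx hy]
  refine (intervalIntegral.integral_congr fun t ht ↦ ?_).trans_le <| le_add_of_nonneg_right <|
    intervalIntegral.integral_nonneg_of_ae_restrict hxy <|
      hb.mono fun t ht ↦ mul_nonneg ht (hφ _)
  rw [truncate_eq_self (hzK t (ordConnected_Icc.uIcc_subset hx hy ht))]

lemma neg_snd_le_inv (h : IsTruncatedSolution T K b φ w z) (hzK : ∀ t ∈ Icc 0 T, |z t| ≤ K)
    (hφ : ∀ s, 0 ≤ φ s) (hx : 0 ≤ x) (hy : y ≤ T) (hxy : x < y)
    (hb : ∀ᵐ t ∂volume.restrict (Icc x y), 0 ≤ b t) : -z x ≤ (y - x)⁻¹ := by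
  refine le_inv_of_add_integral_sq_le h.continuous_snd.neg hxy fun t ht ↦ ?_
  have := h.integral_sq_le_sub hzK hφ ⟨hx, hxy.le.trans hy⟩ ⟨hx.trans ht.1, ht.2.trans hy⟩ ht.1
    (ae_restrict_of_ae_restrict_of_subset (Icc_subset_Icc_right ht.2) hb)
  simp only [Pi.neg_apply, neg_sq]
  linarith

lemma snd_le_inv (h : IsTruncatedSolution T K b φ w z) (hzK : ∀ t ∈ Icc 0 T, |z t| ≤ K)
    (hφ : ∀ s, 0 ≤ φ s) (hx : 0 ≤ x) (hy : y ≤ T) (hxy : x < y)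
    (hb : ∀ᵐ t ∂volume.restrict (Icc x y), 0 ≤ b t) : z y ≤ (y - x)⁻¹ := by
  refine le_inv_of_add_integral_sq_le (f := fun t ↦ z (x + y - t))
    (h.continuous_snd.comp (by fun_prop)) hxy fun t ht ↦ ?_
  have hxt : x ≤ x + y - t := by linarith [ht.2]
  have hty : x + y - t ≤ y := by linarith [ht.1]
  have := h.integral_sq_le_sub hzK hφ ⟨hx.trans hxt, hty.trans hy⟩ ⟨hx.trans hxy.le, hy⟩ hty
    (ae_restrict_of_ae_restrict_of_subset (Icc_subset_Icc_left hxt) hb)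
  rw [intervalIntegral.integral_comp_sub_left fun t ↦ z t ^ 2, add_sub_cancel_left]
  linarith

lemma mul_integral_le_inv_add_inv (h : IsTruncatedSolution T K b φ w z)
    (hzK : ∀ t ∈ Icc 0 T, |z t| ≤ K) (hb : IntervalIntegrable b volume 0 T) (hφ : ∀ s, 0 ≤ φ s)
    (hκ : ∀ t ∈ Icc 0 T, κ ≤ φ (w t)) (hx₁ : 0 ≤ x₁) (hc : x₁ < c) (hcd : c ≤ d) (hd : d < x₂)
    (hx₂ : x₂ ≤ T) (hbJ : ∀ᵐ t ∂volume.restrict (Icc x₁ x₂), 0 ≤ b t) :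
    κ * ∫ t in c..d, b t ≤ (c - x₁)⁻¹ + (x₂ - d)⁻¹ := by
  have hcT : c ∈ Icc 0 T := ⟨by linarith, by linarith⟩
  have hdT : d ∈ Icc 0 T := ⟨by linarith, by linarith⟩
  have hbJ' {u v} (hu : x₁ ≤ u) (hv : v ≤ x₂) : ∀ᵐ t ∂volume.restrict (Icc u v), 0 ≤ b t :=
    ae_restrict_of_ae_restrict_of_subset (Icc_subset_Icc hu hv) hbJ
  have hzc := h.snd_le_inv hzK hφ hx₁ hcT.2 hc (hbJ' le_rfl (hcd.trans hd.le))
  have hzd := h.neg_snd_le_inv hzK hφ hdT.1 hx₂ hd (hbJ' (hc.le.trans hcd) le_rfl)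
  have hmono : ∫ t in c..d, κ * b t ≤ ∫ t in c..d, b t * φ (w t) := by
    refine intervalIntegral.integral_mono_ae_restrict hcd ?_ (h.intervalIntegrable_mul hcT hdT) ?_
    · refine (hb.mono_set ?_).const_mul κ
      rw [uIcc_of_le hcd, uIcc_of_le (hcT.1.trans hcT.2)]
      exact Icc_subset_Icc hcT.1 hdT.2
    · filter_upwards [hbJ' hc.le hd.le, ae_restrict_mem measurableSet_Icc] with t ht htcd
      rw [mul_comm]
      exact mul_le_mul_of_nonneg_left (hκ t ⟨hcT.1.trans htcd.1, htcd.2.trans hdT.2⟩) ht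
  have hsq : 0 ≤ ∫ t in c..d, truncate K (z t) ^ 2 :=
    intervalIntegral.integral_nonneg hcd fun _ _ ↦ sq_nonneg _
  rw [intervalIntegral.integral_const_mul] at hmono
  linarith [h.snd_sub hcT hdT]

end IsTruncatedSolution

theorem eventually_atTop_snd_lt (hb : IntervalIntegrable b volume 0 T) (hφ : ∀ s, 0 ≤ φ s)
    (hC : ∀ s, φ s ≤ C) (hK : 2 * (C * ∫ t in 0..T, |b t|) ≤ K) (hκ : ∀ᶠ s in atTop, κ ≤ φ s)
    (hx₁ : 0 ≤ x₁) (hc : x₁ < c) (hcd : c ≤ d) (hd : d < x₂) (hx₂ : x₂ ≤ T)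
    (hbJ : ∀ᵐ t ∂volume.restrict (Icc x₁ x₂), 0 ≤ b t)
    (hlarge : (c - x₁)⁻¹ + (x₂ - d)⁻¹ < κ * ∫ t in c..d, b t) :
    ∀ᶠ s in atTop, ∀ w z, IsTruncatedSolution T K b φ w z → w 0 = s → ∀ x₀ ∈ Icc 0 T, z x₀ = 0 →
      z T < z 0 := by
  obtain ⟨V, hV⟩ := eventually_atTop.1 hκ
  filter_upwards [eventually_ge_atTop (V + K * T)] with s hs w z h hw₀ x₀ hx₀ hz
  by_contra! hzT
  have hzK (t) (ht : t ∈ Icc 0 T) : |z t| ≤ K :=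
    (h.abs_snd_le hb (fun t _ ↦ (abs_of_nonneg (hφ _)).trans_le (hC _)) hx₀ hz hzT ht).trans hK
  have hwV (t) (ht : t ∈ Icc 0 T) : V ≤ w t := by
    have hK₀ : 0 ≤ K := (abs_nonneg _).trans (hzK t ht)
    have := abs_le.1 (h.abs_fst_sub_le (fun t _ ↦ abs_truncate_le hK₀ (z t)) ht)
    linarith
  exact hlarge.not_ge (h.mul_integral_le_inv_add_inv hzK hb hφ (fun t ht ↦ hV _ (hwV t ht)) hx₁ hc
    hcd hd hx₂ hbJ)

end Asymptotics

section BoundaryValueProblems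

lemma isOpen_setOf_imp {X : Type*} [TopologicalSpace X] {p q : X → Prop} (hp : IsClosed {x | p x})
    (hq : IsOpen {x | q x}) : IsOpen {x | p x → q x} := by
  simp only [imp_iff_not_or]
  exact hp.isOpen_compl.union hq

variable {T K C α β : ℝ} {b φ w z : ℝ → ℝ}

namespace IsTruncatedSolution

lemma intervalIntegrable_truncate (h : IsTruncatedSolution T K b φ w z) :
    IntervalIntegrable (fun t ↦ truncate K (z t)) volume 0 T :=
  ((continuous_truncate K).comp h.continuous_snd).intervalIntegrable 0 T

lemma fst_zero_lt (h : IsTruncatedSolution T K b φ w z) (hT : 0 < T) (hK : 0 < K)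
    (hz : ∀ t ∈ Icc 0 T, 0 < z t) : w 0 < w T := by
  rw [h.fst_eq T (right_mem_Icc.2 hT.le)]
  exact lt_add_of_pos_right _ <| intervalIntegral.intervalIntegral_pos_of_pos_on
    h.intervalIntegrable_truncate (fun t ht ↦ truncate_pos hK (hz t (Ioo_subset_Icc_self ht))) hT

lemma fst_lt_zero (h : IsTruncatedSolution T K b φ w z) (hT : 0 < T) (hK : 0 < K)
    (hz : ∀ t ∈ Icc 0 T, z t < 0) : w T < w 0 := by
  have hneg : 0 < ∫ t in 0..T, -truncate K (z t) :=
    intervalIntegral.intervalIntegral_pos_of_pos_on h.intervalIntegrable_truncate.neg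
      (fun t ht ↦ neg_pos.2 (truncate_neg hK (hz t (Ioo_subset_Icc_self ht)))) hT
  rw [intervalIntegral.integral_neg, neg_pos] at hneg
  rw [h.fst_eq T (right_mem_Icc.2 hT.le)]
  exact add_lt_of_neg_right _ hneg

lemma exists_snd_eq_zero (h : IsTruncatedSolution T K b φ w z) (hT : 0 < T) (hK : 0 < K)
    (hw : w T = w 0) : ∃ x ∈ Icc 0 T, z x = 0 := by
  obtain ⟨x, hx, hzx⟩ := exists_eq_interval_average hT.ne
    ((continuous_truncate K).comp h.continuous_snd).continuousOn
  have hint := h.fst_eq T (right_mem_Icc.2 hT.le)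
  rw [hw, left_eq_add] at hint
  rw [interval_average_eq, Function.comp_def, hint, smul_zero] at hzx
  rw [uIoo_of_le hT.le] at hx
  exact ⟨x, Ioo_subset_Icc_self hx, eq_zero_of_truncate_eq_zero hK hzx⟩

end IsTruncatedSolution

theorem exists_isTruncatedSolution_snd_eq_zero (hT : 0 < T) (hK : 0 ≤ K)
    (hb : IntervalIntegrable b volume 0 T) (hφ : Continuous φ) (hC : ∀ s, |φ s| ≤ C) (hαβ : α ≤ β)
    (hα : ∀ w z, IsTruncatedSolution T K b φ w z → w 0 = α → ∀ x₀ ∈ Icc 0 T, z x₀ = 0 → z 0 < z T)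
    (hβ : ∀ w z, IsTruncatedSolution T K b φ w z → w 0 = β → ∀ x₀ ∈ Icc 0 T, z x₀ = 0 →
      z T < z 0) :
    ∃ w z, IsTruncatedSolution T K b φ w z ∧ z 0 = 0 ∧ z T = 0 := by
  by_contra! hne
  obtain ⟨F, hF, hFU⟩ := exists_continuous_forall_mem_of_isTruncatedSolution hT hK hb hφ hC
    (Q := Icc α β ×ˢ {0}) (isCompact_Icc.prod isCompact_singleton)
    (U := {q | q.2.2 ≠ 0 ∧ (q.1.1 = α → 0 < q.2.2) ∧ (q.1.1 = β → q.2.2 < 0)})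
    ((isOpen_ne_fun (by fun_prop) (by fun_prop)).inter
      ((isOpen_setOf_imp (isClosed_eq (by fun_prop) (by fun_prop))
        (isOpen_lt (by fun_prop) (by fun_prop))).inter
      (isOpen_setOf_imp (isClosed_eq (by fun_prop) (by fun_prop))
        (isOpen_lt (by fun_prop) (by fun_prop))))) fun w z h hQ ↦ by
    have hz₀ : z 0 = 0 := hQ.2
    have h0 : (0 : ℝ) ∈ Icc 0 T := left_mem_Icc.2 hT.le
    exact ⟨hne w z h hz₀, fun hw ↦ hz₀ ▸ hα w z h hw 0 h0 hz₀,
      fun hw ↦ (hβ w z h hw 0 h0 hz₀).trans_eq hz₀⟩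
  have hFU (x) (hx : x ∈ Icc α β) := hFU (x, 0) ⟨hx, rfl⟩
  have hf : Continuous fun x ↦ (F (x, 0)).2 := by fun_prop
  obtain ⟨x, hx, hFx⟩ := intermediate_value_Icc' hαβ hf.continuousOn
    ⟨((hFU β (right_mem_Icc.2 hαβ)).2.2 rfl).le, ((hFU α (left_mem_Icc.2 hαβ)).2.1 rfl).le⟩
  exact (hFU x hx).1 hFx

lemma exists_forall_abs_snd_sub_lt (hT : 0 ≤ T) (hK : 0 ≤ K)
    (hb : IntervalIntegrable b volume 0 T) (hC : ∀ s, |φ s| ≤ C) :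
    ∃ M ≥ 0, ∀ w z, IsTruncatedSolution T K b φ w z → ∀ t ∈ Icc 0 T, |z t - z 0| < M := by
  refine ⟨K ^ 2 * T + C * (∫ t in 0..T, |b t|) + 1, ?_, fun w z h t ht ↦
    (h.abs_snd_sub_le hK hb (fun t _ ↦ hC (w t)) ht (left_mem_Icc.2 hT)).trans_lt (lt_add_one _)⟩
  have hC₀ : 0 ≤ C := (abs_nonneg _).trans (hC 0)
  have hB : 0 ≤ ∫ t in 0..T, |b t| := intervalIntegral.integral_nonneg hT fun _ _ ↦ abs_nonneg _
  positivity

lemma isOpen_setOf_periodic_boundary (α β M : ℝ) :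
    IsOpen {q : (ℝ × ℝ) × (ℝ × ℝ) | (q.2.1 = q.1.1 → q.2.2 ≠ q.1.2) ∧
      (q.1.2 = -M → q.2.1 < q.1.1) ∧ (q.1.2 = M → q.1.1 < q.2.1) ∧
      (q.1.1 = α → q.2.1 = q.1.1 → q.1.2 < q.2.2) ∧
      (q.1.1 = β → q.2.1 = q.1.1 → q.2.2 < q.1.2)} := by
  have hfst : IsClosed {q : (ℝ × ℝ) × (ℝ × ℝ) | q.2.1 = q.1.1} :=
    isClosed_eq (by fun_prop) (by fun_prop)
  refine (isOpen_setOf_imp hfst (isOpen_ne_fun ?_ ?_)).inter <|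
    (isOpen_setOf_imp (isClosed_eq ?_ ?_) (isOpen_lt ?_ ?_)).inter <|
    (isOpen_setOf_imp (isClosed_eq ?_ ?_) (isOpen_lt ?_ ?_)).inter <|
    (isOpen_setOf_imp (isClosed_eq ?_ ?_) (isOpen_setOf_imp hfst (isOpen_lt ?_ ?_))).inter <|
    isOpen_setOf_imp (isClosed_eq ?_ ?_) (isOpen_setOf_imp hfst (isOpen_lt ?_ ?_))
  all_goals fun_prop

theorem exists_isTruncatedSolution_periodic (hT : 0 < T) (hK : 0 < K)
    (hb : IntervalIntegrable b volume 0 T) (hφ : Continuous φ) (hC : ∀ s, |φ s| ≤ C) (hαβ : α ≤ β)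
    (hα : ∀ w z, IsTruncatedSolution T K b φ w z → w 0 = α → ∀ x₀ ∈ Icc 0 T, z x₀ = 0 → z 0 < z T)
    (hβ : ∀ w z, IsTruncatedSolution T K b φ w z → w 0 = β → ∀ x₀ ∈ Icc 0 T, z x₀ = 0 →
      z T < z 0) :
    ∃ w z, IsTruncatedSolution T K b φ w z ∧ w T = w 0 ∧ z T = z 0 := by
  by_contra! hne
  obtain ⟨M, hM, hzM⟩ := exists_forall_abs_snd_sub_lt (φ := φ) hT.le hK.le hb hC
  obtain ⟨F, hF, hFU⟩ := exists_continuous_forall_mem_of_isTruncatedSolution hT hK.le hb hφ hC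
    (Q := Icc (α, -M) (β, M)) isCompact_Icc
    (isOpen_setOf_periodic_boundary α β M) fun w z h _ ↦ by
    refine ⟨hne w z h, fun hz ↦ h.fst_lt_zero hT hK fun t ht ↦ ?_,
      fun hz ↦ h.fst_zero_lt hT hK fun t ht ↦ ?_, fun hw hwT ↦ ?_, fun hw hwT ↦ ?_⟩
    · linarith [(abs_lt.1 (hzM w z h t ht)).2]
    · linarith [(abs_lt.1 (hzM w z h t ht)).1]
    · obtain ⟨x₀, hx₀, hz⟩ := h.exists_snd_eq_zero hT hK hwT
      exact hα w z h hw x₀ hx₀ hz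
    · obtain ⟨x₀, hx₀, hz⟩ := h.exists_snd_eq_zero hT hK hwT
      exact hβ w z h hw x₀ hx₀ hz
  have hf : Continuous fun p ↦ (F p).1 - p.1 := by fun_prop
  have hg : Continuous fun p ↦ (F p).2 - p.2 := by fun_prop
  have hMM : -M ≤ M := by linarith
  have hα (y) (hy : y ∈ Icc (-M) M) := hFU (α, y) ⟨⟨le_rfl, hy.1⟩, ⟨hαβ, hy.2⟩⟩
  have hβ (y) (hy : y ∈ Icc (-M) M) := hFU (β, y) ⟨⟨hαβ, hy.1⟩, ⟨le_rfl, hy.2⟩⟩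
  have hbot (x) (hx : x ∈ Icc α β) := hFU (x, -M) ⟨⟨hx.1, le_rfl⟩, ⟨hx.2, hMM⟩⟩
  have htop (x) (hx : x ∈ Icc α β) := hFU (x, M) ⟨⟨hx.1, hMM⟩, ⟨hx.2, le_rfl⟩⟩
  obtain ⟨p, hp, hfp, hgp⟩ := exists_common_zero_of_rectangle hαβ hMM hf.continuousOn
    hg.continuousOn (fun x hx ↦ sub_neg.2 ((hbot x hx).2.1 rfl))
    (fun x hx ↦ sub_pos.2 ((htop x hx).2.2.1 rfl))
    (fun y hy hfy ↦ sub_pos.2 ((hα y hy).2.2.2.1 rfl (sub_eq_zero.1 hfy)))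
    (fun y hy hfy ↦ sub_neg.2 ((hβ y hy).2.2.2.2 rfl (sub_eq_zero.1 hfy)))
  exact (hFU p hp).1 (sub_eq_zero.1 hfp) (sub_eq_zero.1 hgp)

end BoundaryValueProblems

section Exponential

lemma integral_mul_add_mul_deriv {f Z E E' : ℝ → ℝ} {x y : ℝ} (hf : IntervalIntegrable f volume x y)
    (hZ : ∀ t ∈ uIcc x y, Z t = Z x + ∫ s in x..t, f s) (hE : ∀ t, HasDerivAt E (E' t) t)
    (hE' : Continuous E') :
    ∫ t in x..y, (f t * E t + Z t * E' t) = Z y * E y - Z x * E x := by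
  have hF : AbsolutelyContinuousOnInterval (fun t ↦ Z x + ∫ s in x..t, f s) x y :=
    (contDiffOn_const (n := 1)).absolutelyContinuousOnInterval.add
      (hf.absolutelyContinuousOnInterval_intervalIntegral left_mem_uIcc)
  have hEd : deriv E = E' := funext fun t ↦ (hE t).deriv
  have hEc : ContDiff ℝ 1 E :=
    contDiff_one_iff_deriv.2 ⟨fun t ↦ (hE t).differentiableAt, hEd ▸ hE'⟩
  have hparts := hF.integral_deriv_mul_eq_sub hEc.contDiffOn.absolutelyContinuousOnInterval
  rw [← hZ y right_mem_uIcc, ← hZ x left_mem_uIcc] at hparts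
  rw [← hparts]
  refine intervalIntegral.integral_congr_ae ?_
  filter_upwards [hf.ae_hasDerivAt_integral] with t ht hxy
  have hxy := uIoc_subset_uIcc hxy
  rw [((ht hxy x left_mem_uIcc).const_add (Z x)).deriv, hEd, hZ t hxy]

lemma hasDerivAt_exp_add_integral {z : ℝ → ℝ} (hz : Continuous z) (c x : ℝ) :
    HasDerivAt (fun x ↦ Real.exp (c + ∫ t in 0..x, z t))
      (Real.exp (c + ∫ t in 0..x, z t) * z x) x :=
  ((hz.integral_hasStrictDerivAt 0 x).hasDerivAt.const_add c).exp

/-- The function `s ↦ g(eˢ) / eˢ`, which replaces `g` in the equation satisfied by `log u`. -/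
noncomputable def logQuotient (g : ℝ → ℝ) (s : ℝ) : ℝ := g (Real.exp s) / Real.exp s

lemma logQuotient_mul_exp (g : ℝ → ℝ) (s : ℝ) :
    logQuotient g s * Real.exp s = g (Real.exp s) :=
  div_mul_cancel₀ _ (Real.exp_ne_zero s)

variable {T K x : ℝ} {b φ g w z : ℝ → ℝ}

namespace IsTruncatedSolution

lemma exp_fst_eq (h : IsTruncatedSolution T K b φ w z) (hzK : ∀ t ∈ Icc 0 T, |z t| ≤ K)
    (hx : x ∈ Icc 0 T) : Real.exp (w x) = Real.exp (w 0 + ∫ t in 0..x, z t) := by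
  rw [h.fst_eq x hx]
  refine congrArg (fun y ↦ Real.exp (w 0 + y)) (intervalIntegral.integral_congr fun t ht ↦ ?_)
  rw [uIcc_of_le hx.1] at ht
  exact truncate_eq_self (hzK t ⟨ht.1, ht.2.trans hx.2⟩)

lemma snd_mul_exp_eq (h : IsTruncatedSolution T K b (logQuotient g) w z)
    (hzK : ∀ t ∈ Icc 0 T, |z t| ≤ K) (hx : x ∈ Icc 0 T) :
    z x * Real.exp (w x) = z 0 * Real.exp (w 0) - ∫ t in 0..x, b t * g (Real.exp (w t)) := by
  have hE := hasDerivAt_exp_add_integral h.continuous_snd (w 0)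
  have hsub : uIcc 0 x ⊆ Icc 0 T := by
    rw [uIcc_of_le hx.1]
    exact Icc_subset_Icc_right hx.2
  have hparts := integral_mul_add_mul_deriv
    (Z := z) (f := fun t ↦ -(truncate K (z t) ^ 2 + b t * logQuotient g (w t)))
    ((h.intervalIntegrable_sq 0 x).add
      (h.intervalIntegrable_mul (hsub left_mem_uIcc) hx)).neg
    (fun t ht ↦ by rw [h.snd_eq t (hsub ht), intervalIntegral.integral_neg, sub_eq_add_neg]) hE
    ((continuous_iff_continuousAt.2 fun t ↦ (hE t).continuousAt).mul h.continuous_snd)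
  rw [← h.exp_fst_eq hzK hx, ← h.exp_fst_eq hzK (hsub left_mem_uIcc)] at hparts
  rw [sub_eq_add_neg, ← sub_eq_iff_eq_add', ← hparts, ← intervalIntegral.integral_neg]
  refine intervalIntegral.integral_congr fun t ht ↦ ?_
  rw [← h.exp_fst_eq hzK (hsub ht), truncate_eq_self (hzK t (hsub ht)), ← logQuotient_mul_exp g]
  ring

theorem isSolOn_exp (h : IsTruncatedSolution T K b (logQuotient g) w z)
    (hzK : ∀ t ∈ Icc 0 T, |z t| ≤ K) :
    IsSolOn T (fun t ↦ b t * g (Real.exp (w t))) (fun t ↦ Real.exp (w t))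
      fun t ↦ z t * Real.exp (w t) := by
  refine ⟨fun x hx ↦ ?_, (h.continuous_snd.mul h.continuous_fst.rexp).continuousOn,
    fun x hx ↦ h.snd_mul_exp_eq hzK hx⟩
  have hE := (hasDerivAt_exp_add_integral h.continuous_snd (w 0) x).hasDerivWithinAt
    (s := Icc 0 T)
  rw [← h.exp_fst_eq hzK hx, mul_comm] at hE
  exact hE.congr (fun y hy ↦ h.exp_fst_eq hzK hy) (h.exp_fst_eq hzK hx)

end IsTruncatedSolution
end Exponential

section LogQuotient

open scoped Topology

variable {g : ℝ → ℝ}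

lemma continuous_logQuotient (hg : ContinuousOn g (Ici 0)) : Continuous (logQuotient g) :=
  (hg.comp_continuous Real.continuous_exp fun s ↦ (Real.exp_pos s).le).div Real.continuous_exp
    Real.exp_ne_zero

lemma logQuotient_pos (hg : ∀ s, 0 < s → 0 < g s) (s : ℝ) : 0 < logQuotient g s :=
  div_pos (hg _ (Real.exp_pos s)) (Real.exp_pos s)

lemma tendsto_logQuotient_atBot (hg : Tendsto (fun s ↦ g s / s) (𝓝[>] 0) (𝓝 0)) :
    Tendsto (logQuotient g) atBot (𝓝 0) :=
  hg.comp Real.tendsto_exp_atBot_nhdsGT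

lemma exists_pos_eventually_le_logQuotient (hg : 0 < GrowthLiminf g) :
    ∃ κ > 0, ∀ᶠ s in atTop, κ ≤ logQuotient g s := by
  obtain ⟨κ, hκ₀, hκ⟩ := EReal.lt_iff_exists_real_btwn.1 hg
  refine ⟨κ, EReal.coe_pos.1 hκ₀, ?_⟩
  filter_upwards [Real.tendsto_exp_atTop.eventually (eventually_lt_of_lt_liminf hκ)] with s hs
  exact (EReal.coe_lt_coe_iff.1 hs).le

lemma exists_eventually_logQuotient_le (hg : GrowthLimsup g < ⊤) :
    ∃ C, ∀ᶠ s in atTop, logQuotient g s ≤ C := by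
  obtain ⟨C, hC, -⟩ := EReal.lt_iff_exists_real_btwn.1 hg
  refine ⟨C, ?_⟩
  filter_upwards [Real.tendsto_exp_atTop.eventually (eventually_lt_of_limsup_lt hC)] with s hs
  exact (EReal.coe_lt_coe_iff.1 hs).le

lemma exists_forall_le_of_eventually_le {f : ℝ → ℝ} {A B : ℝ} (hf : Continuous f)
    (hA : ∀ᶠ s in atBot, f s ≤ A) (hB : ∀ᶠ s in atTop, f s ≤ B) : ∃ C, ∀ s, f s ≤ C := by
  obtain ⟨x, hx⟩ := eventually_atBot.1 hA
  obtain ⟨y, hy⟩ := eventually_atTop.1 hB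
  obtain ⟨M, hM⟩ := (isCompact_Icc (a := x) (b := y)).bddAbove_image hf.continuousOn
  refine ⟨max A (max B M), fun s ↦ ?_⟩
  rcases le_total s x with hsx | hxs
  · exact le_max_of_le_left (hx s hsx)
  rcases le_total y s with hys | hsy
  · exact le_max_of_le_right (le_max_of_le_left (hy s hys))
  · exact le_max_of_le_right (le_max_of_le_right (hM ⟨s, ⟨hxs, hsy⟩, rfl⟩))

lemma exists_forall_logQuotient_le (hg : ContinuousOn g (Ici 0))
    (hg₀ : Tendsto (fun s ↦ g s / s) (𝓝[>] 0) (𝓝 0)) (hsup : GrowthLimsup g < ⊤) :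
    ∃ C, ∀ s, logQuotient g s ≤ C :=
  exists_forall_le_of_eventually_le (continuous_logQuotient hg)
    ((tendsto_logQuotient_atBot hg₀).eventually_le_const one_pos)
    (exists_eventually_logQuotient_le hsup).choose_spec

lemma exists_abs_mul_sub_one_lt {ε : ℝ} (hε : 0 < ε) :
    ∃ δ > 0, ∀ p q : ℝ, |p - 1| < δ → |q - 1| < δ → |p * q - 1| < ε := by
  have h : Tendsto (fun x : ℝ × ℝ ↦ x.1 * x.2) (𝓝 (1, 1)) (𝓝 1) :=
    Continuous.tendsto' (by fun_prop) _ _ (one_mul 1)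
  obtain ⟨δ, hδ, hpq⟩ := Metric.tendsto_nhds_nhds.1 h ε hε
  exact ⟨δ, hδ, fun p q hp hq ↦ hpq (x := (p, q)) (max_lt hp hq)⟩

lemma logQuotient_div_logQuotient (g : ℝ → ℝ) (r s : ℝ) :
    logQuotient g r / logQuotient g s =
      g (Real.exp (r - s) * Real.exp s) / g (Real.exp s) * Real.exp (s - r) := by
  rw [← Real.exp_add, sub_add_cancel, Real.exp_sub, logQuotient, logQuotient, div_div_div_eq,
    mul_comm (Real.exp r), mul_div_mul_comm]

lemma RegOscAtZero.exists_eventually_abs_logQuotient_div_sub_one_lt (hg : RegOscAtZero g) {ε : ℝ}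
    (hε : 0 < ε) :
    ∃ η > 0, ∀ᶠ s in atBot, ∀ r, |r - s| < η → |logQuotient g r / logQuotient g s - 1| < ε := by
  obtain ⟨ε', hε', hmul⟩ := exists_abs_mul_sub_one_lt hε
  obtain ⟨δ, hδ, η, hη, hosc⟩ := hg ε' hε'
  have hexp : Tendsto Real.exp (𝓝 0) (𝓝 1) := Real.continuous_exp.tendsto' 0 1 Real.exp_zero
  obtain ⟨θ, hθ, hθη⟩ := Metric.tendsto_nhds_nhds.1 hexp (min η ε') (lt_min hη hε')
  have hθη (x : ℝ) (hx : |x| < θ) := hθη (x := x) (by rwa [Real.dist_0_eq_abs])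
  refine ⟨θ, hθ, ?_⟩
  filter_upwards [Real.tendsto_exp_atBot.eventually (gt_mem_nhds hδ)] with s hs r hr
  rw [logQuotient_div_logQuotient]
  exact hmul _ _ (hosc _ _ (Real.exp_pos s) hs ((hθη _ hr).trans_le (min_le_left _ _)))
    ((hθη _ (abs_sub_comm r s ▸ hr)).trans_le (min_le_right _ _))

end LogQuotient

section PositiveSolutions

open scoped Topology

variable {T κ c d x₁ x₂ : ℝ} {b g : ℝ → ℝ}

theorem posSolNeumann_and_posSolPeriodic (hT : 0 < T) (hb : IntervalIntegrable b volume 0 T)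
    (hneg : ∫ t in 0..T, b t < 0) (hgc : ContinuousOn g (Ici 0))
    (hgp : ∀ s, 0 < s → 0 < g s) (hreg : RegOscAtZero g)
    (hg₀ : Tendsto (fun s ↦ g s / s) (𝓝[>] 0) (𝓝 0)) (hsup : GrowthLimsup g < ⊤)
    (hκ : ∀ᶠ s in atTop, κ ≤ logQuotient g s) (hx₁ : 0 ≤ x₁) (hc : x₁ < c) (hcd : c ≤ d)
    (hd : d < x₂) (hx₂ : x₂ ≤ T) (hbJ : ∀ᵐ t ∂volume.restrict (Icc x₁ x₂), 0 ≤ b t)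
    (hlarge : (c - x₁)⁻¹ + (x₂ - d)⁻¹ < κ * ∫ t in c..d, b t) :
    PosSolNeumann T b g ∧ PosSolPeriodic T b g := by
  have hφ := continuous_logQuotient hgc
  have hφp := logQuotient_pos hgp
  obtain ⟨C, hC⟩ := exists_forall_logQuotient_le hgc hg₀ hsup
  have hCabs (s) : |logQuotient g s| ≤ C := (abs_of_pos (hφp s)).trans_le (hC s)
  obtain ⟨K, hK, hCK⟩ : ∃ K > 0, 2 * (C * ∫ t in 0..T, |b t|) ≤ K :=
    ⟨max 1 _, lt_max_of_lt_left one_pos, le_max_right _ _⟩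
  obtain ⟨α, hα, hα₀⟩ := ((eventually_atBot_snd_zero_lt hK.le hb hneg hφp
    (tendsto_logQuotient_atBot hg₀)
    fun ε hε ↦ hreg.exists_eventually_abs_logQuotient_div_sub_one_lt hε).and
    (eventually_le_atBot 0)).exists
  obtain ⟨β, hβ, hβ₀⟩ := ((eventually_atTop_snd_lt hb (fun s ↦ (hφp s).le) hC hCK hκ hx₁ hc hcd hd
    hx₂ hbJ hlarge).and (eventually_ge_atTop 0)).exists
  have hsol {w z} (h : IsTruncatedSolution T K b (logQuotient g) w z) {x₀} (hx₀ : x₀ ∈ Icc 0 T)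
      (hz : z x₀ = 0) (hzT : z 0 ≤ z T) := h.isSolOn_exp fun t ht ↦
    (h.abs_snd_le hb (fun s _ ↦ hCabs (w s)) hx₀ hz hzT ht).trans hCK
  constructor
  · obtain ⟨w, z, h, hz₀, hzT⟩ := exists_isTruncatedSolution_snd_eq_zero hT hK.le hb hφ hCabs
      (hα₀.trans hβ₀) hα hβ
    exact ⟨_, _, hsol h (left_mem_Icc.2 hT.le) hz₀ (hz₀.trans_le hzT.ge),
      fun x _ ↦ Real.exp_pos _, mul_eq_zero_of_left hz₀ _, mul_eq_zero_of_left hzT _⟩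
  · obtain ⟨w, z, h, hw, hz⟩ := exists_isTruncatedSolution_periodic hT hK hb hφ hCabs
      (hα₀.trans hβ₀) hα hβ
    obtain ⟨x₀, hx₀, hzx₀⟩ := h.exists_snd_eq_zero hT hK hw
    exact ⟨_, _, hsol h hx₀ hzx₀ hz.ge, fun x _ ↦ Real.exp_pos _, by simp only [hw],
      by simp only [hw, hz]⟩

end PositiveSolutions

/-- Corollary: if `a ≥ 0` a.e. on a closed interval `J = [x₁,x₂] ⊆ [0,T]` with
`∫₀ᵀ a < 0 < ∫_J a`, and `g` satisfies (g1), is regularly oscillating at zero,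
with `g(s)/s → 0` as `s → 0⁺` and `0 < liminf_{s→+∞} g(s)/s ≤ limsup_{s→+∞} g(s)/s < +∞`,
then for every sufficiently large `ν` the equation `u'' + ν a(x) g(u) = 0` has a
positive Neumann solution and a positive periodic solution. -/
theorem statement_7
    (T : ℝ) (hT : 0 < T)
    (a : ℝ → ℝ) (ha : IntervalIntegrable a volume 0 T)
    (x₁ x₂ : ℝ) (hx1 : 0 ≤ x₁) (hx12 : x₁ ≤ x₂) (hx2 : x₂ ≤ T)
    (haJ : ∀ᵐ x ∂(volume.restrict (Icc x₁ x₂)), 0 ≤ a x)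
    (ha2 : (∫ x in (0:ℝ)..T, a x) < 0)
    (haJpos : 0 < ∫ x in x₁..x₂, a x)
    (g : ℝ → ℝ) (hg1 : CondG1 g) (hreg : RegOscAtZero g)
    (hg0 : Tendsto (fun s => g s / s) (nhdsWithin 0 (Ioi 0)) (nhds 0))
    (hinf : (0 : EReal) < GrowthLiminf g)
    (hsup : GrowthLimsup g < ⊤) :
    ∃ νs : ℝ, 0 < νs ∧ ∀ ν : ℝ, νs < ν →
      PosSolNeumann T (fun t => ν * a t) g ∧ PosSolPeriodic T (fun t => ν * a t) g := by
  have hJ : uIcc x₁ x₂ ⊆ uIcc 0 T := by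
    rw [uIcc_of_le hx12, uIcc_of_le hT.le]
    exact Icc_subset_Icc hx1 hx2
  obtain ⟨κ, hκ₀, hκ⟩ := exists_pos_eventually_le_logQuotient hinf
  obtain ⟨c, d, hc, hcd, hd, hcdpos⟩ := exists_lt_lt_integral_pos hx12 (ha.mono_set hJ) haJpos
  have := inv_pos.2 (sub_pos.2 hc)
  have := inv_pos.2 (sub_pos.2 hd)
  refine ⟨((c - x₁)⁻¹ + (x₂ - d)⁻¹) / (κ * ∫ t in c..d, a t), by positivity, fun ν hν ↦ ?_⟩
  have hν₀ : 0 < ν := lt_trans (by positivity) hν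
  refine posSolNeumann_and_posSolPeriodic hT (ha.const_mul ν) ?_ hg1.1 hg1.2.2.2 hreg hg0 hsup hκ
    hx1 hc hcd.le hd hx2 (haJ.mono fun t ht ↦ mul_nonneg hν₀.le ht) ?_
  · rw [intervalIntegral.integral_const_mul]
    exact mul_neg_of_pos_of_neg hν₀ ha2
  · rw [intervalIntegral.integral_const_mul, mul_left_comm]
    exact (div_lt_iff₀ (by positivity)).1 hν
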